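/- arXiv:2509.16047 — 2 statements merged into one kernel-verified Lean document; each statement's English description precedes it below -/
import Mathlib

section
/- Let N ≥ 1 and k ≥ 1 be integers, let Ω ⊆ ℝ^N be open, and let u : Ω → ℝ be smooth. Then on Ω, Δ^k( |x|²·u ) = |x|²·Δ^k u + 2k · Δ^{k−1}( (N − 2k + 2)·u + 2⟨x, ∇u⟩ ). -/
/-- The Euclidean Laplacian `Δu = ∑ i, ∂²u/∂xᵢ²` of a function on `ℝᴺ`. -/
noncomputable def lap {N : ℕ} (f : EuclideanSpace ℝ (Fin N) → ℝ)
    (x : EuclideanSpace ℝ (Fin N)) : ℝ :=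
  ∑ i, fderiv ℝ (fun y => fderiv ℝ f y (EuclideanSpace.single i 1)) x
    (EuclideanSpace.single i 1)

/-- The Euler (radial) operator `Eu(x) = ⟨x, ∇u(x)⟩ = ∑ i, xᵢ ∂u/∂xᵢ`. -/
noncomputable def eulerOp {N : ℕ} (f : EuclideanSpace ℝ (Fin N) → ℝ)
    (x : EuclideanSpace ℝ (Fin N)) : ℝ :=
  ∑ i, x i * fderiv ℝ f x (EuclideanSpace.single i 1)

open scoped ContDiff

/-- Partial derivative. -/
noncomputable def pd {N : ℕ} (i : Fin N) (f : EuclideanSpace ℝ (Fin N) → ℝ)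
    (x : EuclideanSpace ℝ (Fin N)) : ℝ :=
  fderiv ℝ f x (EuclideanSpace.single i 1)

section helpers

variable {N : ℕ} {Ω : Set (EuclideanSpace ℝ (Fin N))}
  {f g u : EuclideanSpace ℝ (Fin N) → ℝ}

theorem lap_eq_pd (f : EuclideanSpace ℝ (Fin N) → ℝ) :
    lap f = fun x => ∑ i, pd i (pd i f) x := rfl

theorem eulerOp_eq_pd (f : EuclideanSpace ℝ (Fin N) → ℝ) :
    eulerOp f = fun x => ∑ i, x i * pd i f x := rfl

theorem pd_congr (hΩ : IsOpen Ω) (h : Set.EqOn f g Ω) (i : Fin N) :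
    Set.EqOn (pd i f) (pd i g) Ω := by
  intro x hx
  have : f =ᶠ[nhds x] g := h.eventuallyEq_of_mem (hΩ.mem_nhds hx)
  simp only [pd, this.fderiv_eq]

theorem pd_smooth (hΩ : IsOpen Ω) (hf : ContDiffOn ℝ ∞ f Ω) (i : Fin N) :
    ContDiffOn ℝ ∞ (pd i f) Ω := by
  have h := hf.fderiv_of_isOpen hΩ (m := ∞) (by simp)
  exact h.clm_apply contDiffOn_const

theorem smooth_diffAt (hΩ : IsOpen Ω) (hf : ContDiffOn ℝ ∞ f Ω)
    {x : EuclideanSpace ℝ (Fin N)} (hx : x ∈ Ω) : DifferentiableAt ℝ f x :=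
  (hf.contDiffAt (hΩ.mem_nhds hx)).differentiableAt (by simp)

theorem lap_smooth (hΩ : IsOpen Ω) (hf : ContDiffOn ℝ ∞ f Ω) :
    ContDiffOn ℝ ∞ (lap f) Ω := by
  rw [lap_eq_pd]
  exact ContDiffOn.sum fun i _ => pd_smooth hΩ (pd_smooth hΩ hf i) i

theorem coord_smooth (i : Fin N) :
    ContDiffOn ℝ ∞ (fun x : EuclideanSpace ℝ (Fin N) => x i) Ω :=
  (EuclideanSpace.proj i : EuclideanSpace ℝ (Fin N) →L[ℝ] ℝ).contDiff.contDiffOn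

theorem euler_smooth (hΩ : IsOpen Ω) (hf : ContDiffOn ℝ ∞ f Ω) :
    ContDiffOn ℝ ∞ (eulerOp f) Ω := by
  rw [eulerOp_eq_pd]
  exact ContDiffOn.sum fun i _ => (coord_smooth i).mul (pd_smooth hΩ hf i)

theorem pd_add (hΩ : IsOpen Ω) (hf : ContDiffOn ℝ ∞ f Ω) (hg : ContDiffOn ℝ ∞ g Ω)
    (i : Fin N) : Set.EqOn (pd i (fun y => f y + g y)) (fun y => pd i f y + pd i g y) Ω := by
  intro x hx
  simp only [pd]
  rw [fderiv_fun_add (smooth_diffAt hΩ hf hx) (smooth_diffAt hΩ hg hx)]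
  simp

theorem pd_mul (hΩ : IsOpen Ω) (hf : ContDiffOn ℝ ∞ f Ω) (hg : ContDiffOn ℝ ∞ g Ω)
    (i : Fin N) :
    Set.EqOn (pd i (fun y => f y * g y)) (fun y => pd i f y * g y + f y * pd i g y) Ω := by
  intro x hx
  simp only [pd]
  rw [fderiv_fun_mul (smooth_diffAt hΩ hf hx) (smooth_diffAt hΩ hg hx)]
  simp
  ring

theorem pd_const_mul (hΩ : IsOpen Ω) (hf : ContDiffOn ℝ ∞ f Ω) (c : ℝ) (i : Fin N) :
    Set.EqOn (pd i (fun y => c * f y)) (fun y => c * pd i f y) Ω := by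
  intro x hx
  simp only [pd]
  rw [fderiv_const_mul (smooth_diffAt hΩ hf hx)]
  simp

theorem pd_sum (hΩ : IsOpen Ω) {F : Fin N → EuclideanSpace ℝ (Fin N) → ℝ}
    (hF : ∀ j, ContDiffOn ℝ ∞ (F j) Ω) (i : Fin N) :
    Set.EqOn (pd i (fun y => ∑ j, F j y)) (fun y => ∑ j, pd i (F j) y) Ω := by
  intro x hx
  simp only [pd]
  rw [fderiv_fun_sum fun j _ => smooth_diffAt hΩ (hF j) hx]
  simp

theorem pd_coord (i j : Fin N) (x : EuclideanSpace ℝ (Fin N)) :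
    pd i (fun y => y j) x = if j = i then 1 else 0 := by
  have : fderiv ℝ (fun y : EuclideanSpace ℝ (Fin N) => y j) x
      = (EuclideanSpace.proj j : EuclideanSpace ℝ (Fin N) →L[ℝ] ℝ) :=
    (EuclideanSpace.proj j : EuclideanSpace ℝ (Fin N) →L[ℝ] ℝ).fderiv
  simp only [pd, this]
  simp [Pi.single_apply]

theorem pd_normSq (i : Fin N) (x : EuclideanSpace ℝ (Fin N)) :
    pd i (fun y => ‖y‖ ^ 2) x = 2 * x i := by
  simp only [pd]
  rw [(hasStrictFDerivAt_norm_sq x).hasFDerivAt.fderiv]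
  simp [EuclideanSpace.inner_single_right]

theorem pd_comm (hΩ : IsOpen Ω) (hf : ContDiffOn ℝ ∞ f Ω) (i j : Fin N) :
    Set.EqOn (pd i (pd j f)) (pd j (pd i f)) Ω := by
  intro x hx
  have hc := hf.contDiffAt (hΩ.mem_nhds hx)
  have hd : DifferentiableAt ℝ (fderiv ℝ f) x :=
    (hc.fderiv_right (m := 1) (by norm_cast)).differentiableAt (by simp)
  have hs : IsSymmSndFDerivAt ℝ f x := hc.isSymmSndFDerivAt (by simp; exact WithTop.coe_le_coe.2 (le_top : (2 : ℕ∞) ≤ ⊤))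
  have key : ∀ a b : Fin N, pd a (pd b f) x
      = fderiv ℝ (fderiv ℝ f) x (EuclideanSpace.single a 1) (EuclideanSpace.single b 1) := by
    intro a b
    unfold pd
    rw [fderiv_clm_apply hd (differentiableAt_const _)]
    simp
  rw [key, key]
  exact hs _ _

theorem lap_congr (hΩ : IsOpen Ω) (h : Set.EqOn f g Ω) : Set.EqOn (lap f) (lap g) Ω := by
  intro x hx
  simp only [lap_eq_pd]
  exact Finset.sum_congr rfl fun i _ => pd_congr hΩ (pd_congr hΩ h i) i hx

theorem lap_add (hΩ : IsOpen Ω) (hf : ContDiffOn ℝ ∞ f Ω) (hg : ContDiffOn ℝ ∞ g Ω) :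
    Set.EqOn (lap (fun y => f y + g y)) (fun y => lap f y + lap g y) Ω := by
  intro x hx
  simp only [lap_eq_pd]
  rw [← Finset.sum_add_distrib]
  refine Finset.sum_congr rfl fun i _ => ?_
  rw [pd_congr hΩ (pd_add hΩ hf hg i) i hx,
    pd_add hΩ (pd_smooth hΩ hf i) (pd_smooth hΩ hg i) i hx]

theorem lap_const_mul (hΩ : IsOpen Ω) (hf : ContDiffOn ℝ ∞ f Ω) (c : ℝ) :
    Set.EqOn (lap (fun y => c * f y)) (fun y => c * lap f y) Ω := by
  intro x hx
  simp only [lap_eq_pd]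
  rw [Finset.mul_sum]
  refine Finset.sum_congr rfl fun i _ => ?_
  rw [pd_congr hΩ (pd_const_mul hΩ hf c i) i hx,
    pd_const_mul hΩ (pd_smooth hΩ hf i) c i hx]

theorem lapk_congr (hΩ : IsOpen Ω) (k : ℕ) (h : Set.EqOn f g Ω) :
    Set.EqOn (lap^[k] f) (lap^[k] g) Ω := by
  induction k generalizing f g with
  | zero => exact h
  | succ k ih => exact ih (lap_congr hΩ h)

theorem lapk_add (hΩ : IsOpen Ω) (k : ℕ) (hf : ContDiffOn ℝ ∞ f Ω)
    (hg : ContDiffOn ℝ ∞ g Ω) :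
    Set.EqOn (lap^[k] (fun y => f y + g y)) (fun y => lap^[k] f y + lap^[k] g y) Ω := by
  induction k generalizing f g with
  | zero => exact fun _ _ => rfl
  | succ k ih =>
    exact (lapk_congr hΩ k (lap_add hΩ hf hg)).trans (ih (lap_smooth hΩ hf) (lap_smooth hΩ hg))

theorem lapk_const_mul (hΩ : IsOpen Ω) (k : ℕ) (hf : ContDiffOn ℝ ∞ f Ω) (c : ℝ) :
    Set.EqOn (lap^[k] (fun y => c * f y)) (fun y => c * lap^[k] f y) Ω := by
  induction k generalizing f with
  | zero => exact fun _ _ => rfl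
  | succ k ih =>
    exact (lapk_congr hΩ k (lap_const_mul hΩ hf c)).trans (ih (lap_smooth hΩ hf))

theorem normSq_smooth : ContDiffOn ℝ ∞ (fun y : EuclideanSpace ℝ (Fin N) => ‖y‖ ^ 2) Ω :=
  (contDiff_norm_sq ℝ).contDiffOn

/-- `[Δ, |x|²] = 2N + 4E`. -/
theorem lap_normSq_mul (hΩ : IsOpen Ω) (hu : ContDiffOn ℝ ∞ u Ω) :
    Set.EqOn (lap (fun y => ‖y‖ ^ 2 * u y))
      (fun y => ‖y‖ ^ 2 * lap u y + ((2 * N : ℝ) * u y + 4 * eulerOp u y)) Ω := by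
  intro x hx
  have h1 : ∀ i : Fin N, Set.EqOn (pd i (fun y => ‖y‖ ^ 2 * u y))
      (fun y => 2 * (y i * u y) + ‖y‖ ^ 2 * pd i u y) Ω := by
    intro i y hy
    rw [pd_mul hΩ normSq_smooth hu i hy]
    simp only [pd_normSq]
    ring
  have h2 : ∀ i : Fin N, pd i (pd i (fun y => ‖y‖ ^ 2 * u y)) x
      = 2 * u x + 4 * (x i * pd i u x) + ‖x‖ ^ 2 * pd i (pd i u) x := by
    intro i
    have hm := (coord_smooth (Ω := Ω) i).mul hu
    rw [pd_congr hΩ (h1 i) i hx,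
      pd_add hΩ (contDiffOn_const.mul hm) (normSq_smooth.mul (pd_smooth hΩ hu i)) i hx]
    simp only []
    rw [pd_const_mul hΩ hm 2 i hx, pd_mul hΩ normSq_smooth (pd_smooth hΩ hu i) i hx]
    simp only []
    rw [pd_mul hΩ (coord_smooth i) hu i hx]
    simp only [pd_normSq, pd_coord, if_true]
    ring
  simp only [lap_eq_pd, eulerOp_eq_pd, h2, Finset.sum_add_distrib, ← Finset.mul_sum]
  simp
  ring

/-- `[Δ, E] = 2Δ`. -/
theorem euler_lap (hΩ : IsOpen Ω) (hu : ContDiffOn ℝ ∞ u Ω) :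
    Set.EqOn (eulerOp (lap u)) (fun y => lap (eulerOp u) y + (-2) * lap u y) Ω := by
  intro x hx
  have sm : ∀ j i, ContDiffOn ℝ ∞ (pd i (pd j u)) Ω := fun j i =>
    pd_smooth hΩ (pd_smooth hΩ hu j) i
  have h1 : ∀ i : Fin N, Set.EqOn (pd i (eulerOp u))
      (fun y => pd i u y + ∑ j, y j * pd i (pd j u) y) Ω := by
    intro i y hy
    rw [eulerOp_eq_pd, pd_sum hΩ (fun j => (coord_smooth j).mul (pd_smooth hΩ hu j)) i hy]
    simp only [fun j => pd_mul hΩ (coord_smooth j) (pd_smooth hΩ hu j) i hy, pd_coord,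
      Finset.sum_add_distrib]
    simp
  have h2 : ∀ i : Fin N, pd i (pd i (eulerOp u)) x
      = 2 * pd i (pd i u) x + ∑ j, x j * pd i (pd i (pd j u)) x := by
    intro i
    rw [pd_congr hΩ (h1 i) i hx, pd_add hΩ (pd_smooth hΩ hu i)
      (ContDiffOn.sum fun j _ => (coord_smooth j).mul (sm j i)) i hx]
    simp only []
    rw [pd_sum hΩ (fun j => (coord_smooth j).mul (sm j i)) i hx]
    simp only [fun j => pd_mul hΩ (coord_smooth j) (sm j i) i hx, pd_coord,
      Finset.sum_add_distrib]
    simp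
    ring
  have h3 : ∀ j : Fin N, pd j (lap u) x = ∑ i, pd i (pd i (pd j u)) x := by
    intro j
    rw [lap_eq_pd, pd_sum hΩ (fun i => sm i i) j hx]
    refine Finset.sum_congr rfl fun i _ => ?_
    rw [pd_comm hΩ (pd_smooth hΩ hu i) j i hx, pd_congr hΩ (pd_comm hΩ hu j i) i hx]
  simp only [eulerOp_eq_pd (lap u), h3]
  simp only [lap_eq_pd, h2, Finset.sum_add_distrib, ← Finset.mul_sum]
  rw [Finset.sum_comm]
  simp only [Finset.mul_sum]
  rw [Finset.sum_comm]
  rw [Finset.sum_comm]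
  simp only [← Finset.mul_sum]
  ring

theorem main_aux (hΩ : IsOpen Ω) (m : ℕ) (hu : ContDiffOn ℝ ∞ u Ω) :
    ∀ x ∈ Ω, lap^[m + 1] (fun y => ‖y‖ ^ 2 * u y) x
      = ‖x‖ ^ 2 * lap^[m + 1] u x
        + 2 * (m + 1) * (((N : ℝ) - 2 * m) * lap^[m] u x + 2 * lap^[m] (eulerOp u) x) := by
  induction m generalizing u with
  | zero =>
    intro x hx
    have := lap_normSq_mul hΩ hu hx
    simp only [zero_add, Function.iterate_one, Function.iterate_zero, id]
    rw [this]
    push_cast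
    ring
  | succ m ih =>
    intro x hx
    have hL := lap_smooth hΩ hu
    have hE := euler_smooth hΩ hu
    rw [Function.iterate_succ_apply, lapk_congr hΩ (m + 1) (lap_normSq_mul hΩ hu) hx,
      lapk_add hΩ (m + 1) (normSq_smooth.mul hL)
        ((contDiffOn_const.mul hu).add (contDiffOn_const.mul hE)) hx]
    simp only []
    rw [ih hL x hx, lapk_add hΩ (m + 1) (contDiffOn_const.mul hu) (contDiffOn_const.mul hE) hx]
    simp only []
    rw [lapk_const_mul hΩ (m + 1) hu _ hx, lapk_const_mul hΩ (m + 1) hE _ hx,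
      lapk_congr hΩ m (euler_lap hΩ hu) hx,
      lapk_add hΩ m (lap_smooth hΩ hE) (contDiffOn_const.mul hL) hx]
    simp only []
    rw [lapk_const_mul hΩ m hL _ hx]
    simp only [Function.iterate_succ_apply]
    push_cast
    ring

end helpers

/-- The commutator identity
`Δᵏ(|x|²u) = |x|²Δᵏu + 2k·Δ^{k-1}((N - 2k + 2)u + 2⟨x, ∇u⟩)`
underlying the first GJMS construction. -/
theorem laplacian_pow_comm_normSq
    (N k : ℕ) (hN : 1 ≤ N) (hk : 1 ≤ k)
    (Ω : Set (EuclideanSpace ℝ (Fin N))) (hΩ : IsOpen Ω)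
    (u : EuclideanSpace ℝ (Fin N) → ℝ) (hu : ContDiffOn ℝ (⊤ : ℕ∞) u Ω) :
    ∀ x ∈ Ω,
      lap^[k] (fun y => ‖y‖ ^ 2 * u y) x
        = ‖x‖ ^ 2 * lap^[k] u x
          + 2 * k * lap^[k - 1]
              (fun y => ((N : ℝ) - 2 * k + 2) * u y + 2 * eulerOp u y) x := by
  obtain ⟨m, rfl⟩ : ∃ m, k = m + 1 := ⟨k - 1, by omega⟩
  intro x hx
  rw [main_aux hΩ m hu x hx, Nat.add_sub_cancel,
    lapk_add hΩ m (contDiffOn_const.mul hu) (contDiffOn_const.mul (euler_smooth hΩ hu)) hx]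
  simp only []
  rw [lapk_const_mul hΩ m hu _ hx, lapk_const_mul hΩ m (euler_smooth hΩ hu) _ hx]
  push_cast
  ring
end

section
/- Let N ≥ 1 and k ≥ 1 be integers, let w ∈ ℝ, and let u : ℝ^N \ {0} → ℝ be smooth and homogeneous of degree w, i.e. u(t·x) = t^w u(x) for all t > 0 and all x ≠ 0. Then on ℝ^N \ {0}, Δ^k( |x|²·u ) = |x|²·Δ^k u + 2k(2w + N − 2k + 2)·Δ^{k−1} u. In particular, if w = k − 1 − N/2, then Δ^k( |x|²·u ) = |x|²·Δ^k u. -/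
namespace LapAux

/-- The `i`-th partial derivative. -/
noncomputable def pd {N : ℕ} (i : Fin N) (f : EuclideanSpace ℝ (Fin N) → ℝ)
    (x : EuclideanSpace ℝ (Fin N)) : ℝ := fderiv ℝ f x (EuclideanSpace.single i 1)

/-- Smoothness away from the origin. -/
def Sm {N : ℕ} (f : EuclideanSpace ℝ (Fin N) → ℝ) : Prop :=
  ContDiffOn ℝ (⊤ : ℕ∞) f {(0 : EuclideanSpace ℝ (Fin N))}ᶜ

/-- Homogeneity of degree `w`. -/
def Hm {N : ℕ} (w : ℝ) (f : EuclideanSpace ℝ (Fin N) → ℝ) : Prop :=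
  ∀ t : ℝ, 0 < t → ∀ x : EuclideanSpace ℝ (Fin N), x ≠ 0 → f (t • x) = t ^ w * f x

variable {N : ℕ}

theorem nhds_ne {x : EuclideanSpace ℝ (Fin N)} (hx : x ≠ 0) :
    {(0 : EuclideanSpace ℝ (Fin N))}ᶜ ∈ nhds x := isOpen_compl_singleton.mem_nhds hx

theorem lap_eq (f : EuclideanSpace ℝ (Fin N) → ℝ) (x) :
    lap f x = ∑ i, pd i (pd i f) x := rfl

theorem Sm.diffAt {f : EuclideanSpace ℝ (Fin N) → ℝ} (hf : Sm f) {x} (hx : x ≠ 0) :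
    DifferentiableAt ℝ f x :=
  (hf.contDiffAt (nhds_ne hx)).differentiableAt (by simp)

theorem Sm.pd {f : EuclideanSpace ℝ (Fin N) → ℝ} (hf : Sm f) (i : Fin N) : Sm (pd i f) := by
  have h : ContDiffOn ℝ (⊤ : ℕ∞) (fderiv ℝ f) {(0 : EuclideanSpace ℝ (Fin N))}ᶜ :=
    hf.fderiv_of_isOpen isOpen_compl_singleton (by simp)
  exact h.clm_apply contDiffOn_const

theorem Sm.lap {f : EuclideanSpace ℝ (Fin N) → ℝ} (hf : Sm f) : Sm (lap f) := by
  have : Sm (fun x => ∑ i, LapAux.pd i (LapAux.pd i f) x) :=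
    ContDiffOn.sum fun i _ => (hf.pd i).pd i
  exact this

theorem Sm.iter {f : EuclideanSpace ℝ (Fin N) → ℝ} (hf : Sm f) (k : ℕ) : Sm (_root_.lap^[k] f) := by
  induction k with
  | zero => exact hf
  | succ k ih => rw [Function.iterate_succ_apply']; exact ih.lap

theorem Hm.pd {w : ℝ} {f : EuclideanSpace ℝ (Fin N) → ℝ} (hf : Sm f) (hw : Hm w f) (i : Fin N) :
    Hm (w - 1) (pd i f) := by
  intro t ht x hx
  have htx : t • x ≠ 0 := smul_ne_zero ht.ne' hx
  have h1 : HasFDerivAt (fun y : EuclideanSpace ℝ (Fin N) => f (t • y))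
      ((fderiv ℝ f (t • x)).comp (t • ContinuousLinearMap.id ℝ _)) x :=
    HasFDerivAt.comp x (hf.diffAt htx).hasFDerivAt ((hasFDerivAt_id x).const_smul t)
  have h2 : HasFDerivAt (fun y => t ^ w * f y) (t ^ w • fderiv ℝ f x) x :=
    (hf.diffAt hx).hasFDerivAt.const_mul _
  have h3 : HasFDerivAt (fun y : EuclideanSpace ℝ (Fin N) => f (t • y))
      (t ^ w • fderiv ℝ f x) x := by
    refine h2.congr_of_eventuallyEq ?_
    filter_upwards [nhds_ne hx] with y hy using hw t ht y hy
  have h4 := congrArg (fun L => L (EuclideanSpace.single i 1)) (h1.unique h3)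
  simp at h4
  unfold LapAux.pd
  rw [Real.rpow_sub_one ht.ne']
  field_simp
  linarith

theorem Hm.lap {w : ℝ} {f : EuclideanSpace ℝ (Fin N) → ℝ} (hf : Sm f) (hw : Hm w f) :
    Hm (w - 2) (lap f) := by
  intro t ht x hx
  rw [lap_eq, lap_eq, Finset.mul_sum]
  refine Finset.sum_congr rfl fun i _ => ?_
  rw [Hm.pd (hf.pd i) (Hm.pd hf hw i) i t ht x hx]
  congr 2; ring

theorem Hm.iter {w : ℝ} {f : EuclideanSpace ℝ (Fin N) → ℝ} (hf : Sm f) (hw : Hm w f) (k : ℕ) :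
    Hm (w - 2 * k) (_root_.lap^[k] f) := by
  induction k with
  | zero => simpa using hw
  | succ k ih =>
    rw [Function.iterate_succ_apply']
    have := Hm.lap (hf.iter k) ih
    convert this using 1
    push_cast; ring

theorem euler {w : ℝ} {f : EuclideanSpace ℝ (Fin N) → ℝ} (hf : Sm f) (hw : Hm w f)
    {x : EuclideanSpace ℝ (Fin N)} (hx : x ≠ 0) : ∑ i, x i * pd i f x = w * f x := by
  have h1 : HasDerivAt (fun t : ℝ => f (t • x)) (fderiv ℝ f x x) 1 := by
    have hd : HasDerivAt (fun t : ℝ => t • x) x 1 := by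
      simpa using (hasDerivAt_id (1 : ℝ)).smul_const x
    have hF : HasFDerivAt f (fderiv ℝ f x) ((1 : ℝ) • x) := by
      rw [one_smul]; exact (hf.diffAt hx).hasFDerivAt
    exact hF.comp_hasDerivAt (1 : ℝ) hd
  have h2 : HasDerivAt (fun t : ℝ => t ^ w * f x) (w * f x) 1 := by
    have := (Real.hasDerivAt_rpow_const (x := 1) (p := w) (Or.inl one_ne_zero)).mul_const (f x)
    simpa using this
  have h3 : HasDerivAt (fun t : ℝ => f (t • x)) (w * f x) 1 := by
    refine h2.congr_of_eventuallyEq ?_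
    filter_upwards [Ioi_mem_nhds (zero_lt_one' ℝ)] with t ht using hw t ht x hx
  rw [← h1.unique h3]
  have hs : x = ∑ i, x i • EuclideanSpace.single i (1 : ℝ) := by
    have := (EuclideanSpace.basisFun (Fin N) ℝ).sum_repr x
    simpa using this.symm
  have h5 := congrArg (fderiv ℝ f x) hs
  rw [h5, map_sum]
  simp [pd]

theorem pd_congr {f g : EuclideanSpace ℝ (Fin N) → ℝ} (h : ∀ x, x ≠ 0 → f x = g x) (i : Fin N)
    (x : EuclideanSpace ℝ (Fin N)) (hx : x ≠ 0) : pd i f x = pd i g x := by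
  have : f =ᶠ[nhds x] g := by
    filter_upwards [nhds_ne hx] with y hy using h y hy
  unfold pd
  rw [this.fderiv_eq]

theorem lap_congr {f g : EuclideanSpace ℝ (Fin N) → ℝ} (h : ∀ x, x ≠ 0 → f x = g x)
    (x : EuclideanSpace ℝ (Fin N)) (hx : x ≠ 0) : lap f x = lap g x := by
  rw [lap_eq, lap_eq]
  exact Finset.sum_congr rfl fun i _ => pd_congr (pd_congr h i) i x hx

theorem pd_add {f g : EuclideanSpace ℝ (Fin N) → ℝ} (hf : Sm f) (hg : Sm g) (i : Fin N)
    (x : EuclideanSpace ℝ (Fin N)) (hx : x ≠ 0) :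
    pd i (fun y => f y + g y) x = pd i f x + pd i g x := by
  unfold pd
  rw [fderiv_fun_add (hf.diffAt hx) (hg.diffAt hx)]; rfl

theorem pd_mul {f g : EuclideanSpace ℝ (Fin N) → ℝ} (hf : Sm f) (hg : Sm g) (i : Fin N)
    (x : EuclideanSpace ℝ (Fin N)) (hx : x ≠ 0) :
    pd i (fun y => f y * g y) x = f x * pd i g x + g x * pd i f x := by
  unfold pd
  rw [fderiv_fun_mul (hf.diffAt hx) (hg.diffAt hx)]; simp

theorem pd_const (c : ℝ) (i : Fin N) (x) : pd i (fun _ => c) x = 0 := by simp [pd]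

theorem pd_coord (i : Fin N) (x) : pd i (fun y => 2 * y i) x = 2 := by
  have : HasFDerivAt (fun y : EuclideanSpace ℝ (Fin N) => 2 * y i)
      ((2 : ℝ) • (EuclideanSpace.proj i : EuclideanSpace ℝ (Fin N) →L[ℝ] ℝ)) x :=
    (EuclideanSpace.proj i : EuclideanSpace ℝ (Fin N) →L[ℝ] ℝ).hasFDerivAt.const_mul 2
  simp [pd, this.fderiv]

theorem pd_normSq (i : Fin N) (x : EuclideanSpace ℝ (Fin N)) :
    pd i (fun y => ‖y‖ ^ 2) x = 2 * x i := by
  have := (hasStrictFDerivAt_norm_sq x).hasFDerivAt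
  simp [pd, this.fderiv, EuclideanSpace.inner_single_right]

theorem sm_const (c : ℝ) : Sm (N := N) (fun _ => c) := contDiffOn_const

theorem sm_coord (i : Fin N) : Sm (N := N) (fun y => 2 * y i) := by
  unfold Sm; fun_prop

theorem sm_normSq : Sm (N := N) (fun y => ‖y‖ ^ 2) := (contDiff_norm_sq ℝ).contDiffOn

theorem Sm.mul {f g : EuclideanSpace ℝ (Fin N) → ℝ} (hf : Sm f) (hg : Sm g) :
    Sm (fun y => f y * g y) := ContDiffOn.mul hf hg

theorem lap_add {f g : EuclideanSpace ℝ (Fin N) → ℝ} (hf : Sm f) (hg : Sm g)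
    (x : EuclideanSpace ℝ (Fin N)) (hx : x ≠ 0) :
    lap (fun y => f y + g y) x = lap f x + lap g x := by
  simp only [lap_eq, ← Finset.sum_add_distrib]
  refine Finset.sum_congr rfl fun i _ => ?_
  rw [pd_congr (pd_add hf hg i) i x hx, pd_add (hf.pd i) (hg.pd i) i x hx]

theorem lap_const_mul {f : EuclideanSpace ℝ (Fin N) → ℝ} (c : ℝ) (hf : Sm f)
    (x : EuclideanSpace ℝ (Fin N)) (hx : x ≠ 0) :
    lap (fun y => c * f y) x = c * lap f x := by
  have key : ∀ i : Fin N, ∀ g : EuclideanSpace ℝ (Fin N) → ℝ, Sm g →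
      ∀ y : EuclideanSpace ℝ (Fin N), y ≠ 0 → pd i (fun y => c * g y) y = c * pd i g y := by
    intro i g hg y hy
    rw [pd_mul (sm_const c) hg i y hy, pd_const]; ring
  simp only [lap_eq, Finset.mul_sum]
  refine Finset.sum_congr rfl fun i _ => ?_
  rw [pd_congr (key i f hf) i x hx, key i _ (hf.pd i) x hx]

theorem lap_normSq_mul {w : ℝ} {f : EuclideanSpace ℝ (Fin N) → ℝ} (hf : Sm f) (hw : Hm w f)
    (x : EuclideanSpace ℝ (Fin N)) (hx : x ≠ 0) :
    lap (fun y => ‖y‖ ^ 2 * f y) x = ‖x‖ ^ 2 * lap f x + (4 * w + 2 * N) * f x := by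
  have h1 : ∀ i : Fin N, pd i (pd i (fun y => ‖y‖ ^ 2 * f y)) x
      = ‖x‖ ^ 2 * pd i (pd i f) x + 4 * (x i * pd i f x) + 2 * f x := by
    intro i
    have h2 : ∀ y : EuclideanSpace ℝ (Fin N), y ≠ 0 → pd i (fun y => ‖y‖ ^ 2 * f y) y
        = ‖y‖ ^ 2 * pd i f y + f y * (2 * y i) := by
      intro y hy
      rw [pd_mul sm_normSq hf i y hy, pd_normSq]
    rw [pd_congr h2 i x hx, pd_add (sm_normSq.mul (hf.pd i)) (hf.mul (sm_coord i)) i x hx,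
      pd_mul sm_normSq (hf.pd i) i x hx, pd_mul hf (sm_coord i) i x hx, pd_normSq, pd_coord]
    ring
  rw [lap_eq, lap_eq, Finset.sum_congr rfl fun i _ => h1 i, Finset.sum_add_distrib,
    Finset.sum_add_distrib, ← Finset.mul_sum, ← Finset.mul_sum, euler hf hw hx]
  simp
  ring

theorem main {w : ℝ} {u : EuclideanSpace ℝ (Fin N) → ℝ} (hu : Sm u) (hw : Hm w u) (k : ℕ) :
    ∀ x : EuclideanSpace ℝ (Fin N), x ≠ 0 →
      lap^[k] (fun y => ‖y‖ ^ 2 * u y) x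
        = ‖x‖ ^ 2 * lap^[k] u x
          + 2 * k * (2 * w + N - 2 * k + 2) * lap^[k - 1] u x := by
  induction k with
  | zero => intro x _; simp
  | succ k ih =>
    intro x hx
    rw [Function.iterate_succ_apply', lap_congr ih x hx,
      lap_add (sm_normSq.mul (hu.iter k)) ((sm_const _).mul (hu.iter (k - 1))) x hx,
      lap_const_mul _ (hu.iter (k - 1)) x hx, lap_normSq_mul (hu.iter k) (Hm.iter hu hw k) x hx,
      Function.iterate_succ_apply', Nat.add_sub_cancel]
    rcases k with _ | k
    · simp only [Nat.cast_zero, Function.iterate_zero, id, zero_add, Nat.cast_one]; ring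
    · rw [Nat.add_sub_cancel, ← Function.iterate_succ_apply' lap k u]
      push_cast
      ring

end LapAux

/-- For `u` homogeneous of degree `w` on `ℝᴺ \ {0}`,
`Δᵏ(|x|²u) = |x|²Δᵏu + 2k(2w + N - 2k + 2)Δ^{k-1}u`; in particular `Δᵏ` commutes
with multiplication by `|x|²` on functions of the critical homogeneity
`w = k - 1 - N/2`.  This is the key step in the first GJMS construction. -/
theorem laplacian_pow_comm_normSq_homogeneous
    (N k : ℕ) (hN : 1 ≤ N) (hk : 1 ≤ k) (w : ℝ)
    (u : EuclideanSpace ℝ (Fin N) → ℝ)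
    (hu : ContDiffOn ℝ (⊤ : ℕ∞) u {(0 : EuclideanSpace ℝ (Fin N))}ᶜ)
    (hhom : ∀ t : ℝ, 0 < t → ∀ x : EuclideanSpace ℝ (Fin N), x ≠ 0 →
      u (t • x) = t ^ w * u x) :
    (∀ x : EuclideanSpace ℝ (Fin N), x ≠ 0 →
      lap^[k] (fun y => ‖y‖ ^ 2 * u y) x
        = ‖x‖ ^ 2 * lap^[k] u x
          + 2 * k * (2 * w + N - 2 * k + 2) * lap^[k - 1] u x)
    ∧ (w = (k : ℝ) - 1 - N / 2 →
      ∀ x : EuclideanSpace ℝ (Fin N), x ≠ 0 →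
        lap^[k] (fun y => ‖y‖ ^ 2 * u y) x = ‖x‖ ^ 2 * lap^[k] u x) := by
  have h := LapAux.main hu hhom k
  refine ⟨h, fun hw x hx => ?_⟩
  rw [h x hx, hw]
  ring
end
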